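/- Let H(a,b) = ζ(2,…,2,3,2,…,2) with a twos before the 3 and b twos after the 3, and let F(x,y) = ∑_{a,b≥0} (-1)^{a+b+1} H(a,b) x^{2a+2} y^{2b+1}. Then for all real x, y with |x| < 1 and 0 < |y| < 1, one has (π/sin(πy))·F(x,y) = (d/dz)|_{z=0} of z ↦ ₃F₂(x, −x, z; 1+y, 1−y; 1), i.e. the derivative at z = 0 of the function z ↦ ∑_{n=0}^∞ (x)_n(−x)_n(z)_n / (n! (1+y)_n (1−y)_n). -/

import Mathlib

open scoped BigOperators

/-- The multiple zeta value `ζ(k 0, …, k (n-1))`. -/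
noncomputable def mzv {n : ℕ} (k : Fin n → ℕ) : ℝ :=
  ∑' m : Fin n → ℕ+, if StrictMono m then ∏ i, (1 : ℝ) / ((m i : ℕ) : ℝ) ^ (k i) else 0

/-- `H a b = ζ(2,…,2,3,2,…,2)` with `a` twos before the `3` and `b` twos after. -/
noncomputable def Hmzv (a b : ℕ) : ℝ :=
  mzv (fun i : Fin (a + b + 1) => if (i : ℕ) = a then 3 else 2)

/-- The generating function `F(x,y) = ∑_{a,b≥0} (-1)^{a+b+1} H(a,b) x^{2a+2} y^{2b+1}`. -/
noncomputable def Fgen (x y : ℝ) : ℝ :=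
  ∑' a : ℕ, ∑' b : ℕ, (-1 : ℝ) ^ (a + b + 1) * Hmzv a b * x ^ (2 * a + 2) * y ^ (2 * b + 1)

/-- The ascending Pochhammer symbol `(x)_n`. -/
noncomputable def poch (x : ℝ) (n : ℕ) : ℝ := (ascPochhammer ℝ n).eval x

/-- The generalized hypergeometric series `₃F₂(a₁,a₂,a₃; b₁,b₂; 1)`. -/
noncomputable def F32 (a1 a2 a3 b1 b2 : ℝ) : ℝ :=
  ∑' n : ℕ, poch a1 n * poch a2 n * poch a3 n / ((n.factorial : ℝ) * poch b1 n * poch b2 n)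

open Filter Topology

noncomputable def PP (t : ℝ) (n : ℕ) : ℝ := ∏ j ∈ Finset.range n, (1 - t^2/((j:ℝ)+1)^2)

lemma PP_succ (t : ℝ) (n : ℕ) : PP t (n+1) = PP t n * (1 - t^2/((n:ℝ)+1)^2) := by
  unfold PP; rw [Finset.prod_range_succ]

lemma fac_pos' {t : ℝ} (ht : |t| < 1) (n : ℕ) : 0 < 1 - t^2/((n:ℝ)+1)^2 := by
  have h1 : t^2 < 1 := by rw [sq_lt_one_iff_abs_lt_one]; exact ht
  have h2 : (1:ℝ) ≤ ((n:ℝ)+1)^2 := by nlinarith [Nat.cast_nonneg (α := ℝ) n]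
  rw [sub_pos, div_lt_one (by positivity)]; linarith

lemma fac_le {t : ℝ} (n : ℕ) : 1 - t^2/((n:ℝ)+1)^2 ≤ 1 := by
  have : 0 ≤ t^2/((n:ℝ)+1)^2 := by positivity
  linarith

lemma PP_pos {t : ℝ} (ht : |t| < 1) (n : ℕ) : 0 < PP t n :=
  Finset.prod_pos fun j _ => fac_pos' ht j

lemma PP_le_one {t : ℝ} (ht : |t| < 1) (n : ℕ) : PP t n ≤ 1 :=
  Finset.prod_le_one (fun j _ => (fac_pos' ht j).le) fun j _ => fac_le j

lemma PP_anti {t : ℝ} (ht : |t| < 1) : Antitone (PP t) := by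
  refine antitone_nat_of_succ_le fun n => ?_
  rw [PP_succ]
  exact mul_le_of_le_one_right (PP_pos ht n).le (fac_le n)

lemma sin_ne {y : ℝ} (hy0 : 0 < |y|) (hy1 : |y| < 1) : Real.sin (Real.pi * y) ≠ 0 := by
  intro h
  rw [Real.sin_eq_zero_iff] at h
  obtain ⟨k, hk⟩ := h
  have : (k:ℝ) = y := by
    have := Real.pi_pos.ne'
    apply mul_left_cancel₀ this; linarith
  rw [← this] at hy0 hy1
  have h1 : |k| < 1 := by exact_mod_cast hy1
  have h0 : 0 < |k| := by exact_mod_cast hy0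
  omega

lemma PP_tendsto {y : ℝ} (hy0 : 0 < |y|) :
    Tendsto (PP y) atTop (𝓝 (Real.sin (Real.pi * y) / (Real.pi * y))) := by
  have hy : y ≠ 0 := abs_pos.mp hy0
  have hp := Real.pi_pos.ne'
  have := (Real.tendsto_euler_sin_prod y).div_const (Real.pi * y)
  refine this.congr fun n => ?_
  rw [mul_div_cancel_left₀ _ (mul_ne_zero hp hy)]; rfl

lemma PP_ge {y : ℝ} (hy0 : 0 < |y|) (hy1 : |y| < 1) (n : ℕ) :
    Real.sin (Real.pi * y) / (Real.pi * y) ≤ PP y n :=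
  (PP_anti hy1).le_of_tendsto (PP_tendsto hy0) n

lemma lim_pos {y : ℝ} (hy0 : 0 < |y|) (hy1 : |y| < 1) :
    0 < Real.sin (Real.pi * y) / (Real.pi * y) := by
  have h1 : 0 ≤ Real.sin (Real.pi * y) / (Real.pi * y) :=
    ge_of_tendsto' (PP_tendsto hy0) fun n => (PP_pos hy1 n).le
  refine lt_of_le_of_ne h1 (Ne.symm ?_)
  exact div_ne_zero (sin_ne hy0 hy1) (mul_ne_zero Real.pi_pos.ne' (abs_pos.mp hy0))

lemma poch_succ (t : ℝ) (n : ℕ) : poch t (n+1) = poch t n * (t + n) := by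
  unfold poch; rw [ascPochhammer_succ_eval]

lemma poch_zero (t : ℝ) : poch t 0 = 1 := by simp [poch]

lemma poch_succ_left (t : ℝ) (n : ℕ) : poch t (n+1) = t * poch (t+1) n := by
  unfold poch; rw [ascPochhammer_succ_left]; simp

lemma poch_pair (t : ℝ) (n : ℕ) :
    poch (1+t) n * poch (1-t) n = (n.factorial:ℝ)^2 * PP t n := by
  induction n with
  | zero => simp [poch_zero, PP]
  | succ n ih =>
    have : ((n:ℝ)+1) ≠ 0 := by positivity
    rw [poch_succ, poch_succ, PP_succ, Nat.factorial_succ]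
    push_cast
    calc _ = (poch (1+t) n * poch (1-t) n) * ((1+t+n)*(1-t+n)) := by ring
      _ = _ := by rw [ih]; field_simp; ring

lemma poch_pair' (t : ℝ) (n : ℕ) :
    poch t (n+1) * poch (-t) (n+1) = -t^2 * ((n.factorial:ℝ)^2 * PP t n) := by
  rw [poch_succ_left, poch_succ_left, ← poch_pair, add_comm t 1, neg_add_eq_sub]; ring

lemma poch_bound {z : ℝ} (hz : |z| < 1) (n : ℕ) : |poch (z+1) n| ≤ (n+1).factorial := by
  induction n with
  | zero => simp [poch_zero]
  | succ n ih =>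
    rw [poch_succ, abs_mul, Nat.factorial_succ (n+1), mul_comm]
    push_cast
    have := abs_lt.mp hz
    refine mul_le_mul ?_ ih (abs_nonneg _) (by positivity)
    rw [abs_le]; constructor <;> linarith [Nat.cast_nonneg (α := ℝ) n]

noncomputable def cc (x y : ℝ) (n : ℕ) : ℝ :=
  poch x (n+1) * poch (-x) (n+1) / (((n+1).factorial : ℝ) * poch (1+y) (n+1) * poch (1-y) (n+1))

lemma cc_eq (x y : ℝ) (n : ℕ) :
    cc x y n = (-x^2 * (1/((n:ℝ)+1)^2 * PP x n / PP y (n+1))) / ((n+1).factorial : ℝ) := by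
  have : ((n:ℝ)+1) ≠ 0 := by positivity
  have h2 : (n.factorial : ℝ) ≠ 0 := by positivity
  unfold cc
  rw [mul_assoc, poch_pair, poch_pair', Nat.factorial_succ]
  push_cast
  field_simp

lemma cc_bound {x y z : ℝ} (hx : |x| < 1) (hy0 : 0 < |y|) (hy1 : |y| < 1) (hz : |z| < 1) (n : ℕ) :
    ‖cc x y n * poch (z+1) n‖ ≤
      1/((n:ℝ)+1)^2 * (Real.sin (Real.pi * y) / (Real.pi * y))⁻¹ := by
  have hL := lim_pos hy0 hy1
  have hG := PP_ge hy0 hy1 (n+1)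
  have h1 : x^2 ≤ 1 := by rw [sq_le_one_iff_abs_le_one]; exact hx.le
  have hF : (0:ℝ) < (n+1).factorial := by positivity
  rw [cc_eq, Real.norm_eq_abs, abs_mul, abs_div, abs_of_pos hF, abs_mul, abs_neg,
    abs_of_nonneg (sq_nonneg x), abs_div, abs_mul, abs_of_pos (PP_pos hx n),
    abs_of_pos (PP_pos hy1 (n+1)), abs_of_nonneg (by positivity : 0 ≤ 1/((n:ℝ)+1)^2)]
  have hPx := PP_pos hx n
  have hPy := PP_pos hy1 (n+1)
  have hb := poch_bound hz n
  calc _ ≤ x ^ 2 * (1 / ((n:ℝ) + 1) ^ 2 * PP x n / PP y (n + 1)) / ((n+1).factorial:ℝ) * ((n+1).factorial:ℝ) := by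
        gcongr
    _ = x ^ 2 * (1 / ((n:ℝ) + 1) ^ 2 * PP x n / PP y (n + 1)) := by field_simp
    _ ≤ 1 * (1 / ((n:ℝ) + 1) ^ 2 * 1 / (Real.sin (Real.pi * y) / (Real.pi * y))) := by
        gcongr
        exact PP_le_one hx n
    _ = _ := by rw [div_eq_mul_inv]; ring

lemma sum_bound (C : ℝ) : Summable fun n : ℕ => 1/((n:ℝ)+1)^2 * C := by
  refine Summable.mul_right _ ?_
  have := (summable_nat_add_iff 1).mpr (Real.summable_one_div_nat_pow.mpr (one_lt_two))
  simpa using this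

lemma deriv_F32_eq {x y : ℝ} (hx : |x| < 1) (hy0 : 0 < |y|) (hy1 : |y| < 1) :
    deriv (fun z : ℝ => F32 x (-x) z (1 + y) (1 - y)) 0 =
      ∑' n : ℕ, (-x^2 * (1/((n:ℝ)+1)^3 * PP x n / PP y (n+1))) := by
  set G : ℝ → ℝ := fun z => ∑' n, cc x y n * poch (z+1) n with hGdef
  have hsum : ∀ z : ℝ, |z| < 1 → Summable fun n => cc x y n * poch (z+1) n := fun z hz =>
    Summable.of_norm_bounded (sum_bound _) (cc_bound hx hy0 hy1 hz)
  have hcont : ContinuousOn G (Metric.ball 0 1) := by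
    refine continuousOn_tsum (fun n => ?_) (sum_bound _) (fun n z hz => cc_bound hx hy0 hy1 (by simpa using hz) n)
    unfold poch
    fun_prop
  have hc0 : ContinuousAt G 0 := hcont.continuousAt (Metric.ball_mem_nhds 0 one_pos)
  have hG : (fun z : ℝ => F32 x (-x) z (1 + y) (1 - y)) =ᶠ[𝓝 0] fun z => 1 + z * G z := by
    filter_upwards [Metric.ball_mem_nhds (0:ℝ) one_pos] with z hz
    have hz : |z| < 1 := by simpa using hz
    have hterm : ∀ n, poch x (n+1) * poch (-x) (n+1) * poch z (n+1) /
        (((n+1).factorial : ℝ) * poch (1+y) (n+1) * poch (1-y) (n+1)) =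
        z * (cc x y n * poch (z+1) n) := by
      intro n; rw [poch_succ_left z, cc]; ring
    unfold F32
    rw [Summable.tsum_eq_zero_add]
    · simp_rw [hterm]
      rw [tsum_mul_left]; simp [poch_zero, hGdef]
    · rw [← summable_nat_add_iff 1]
      simp_rw [hterm]
      exact (hsum z hz).mul_left z
  rw [hG.deriv_eq]
  have hd : HasDerivAt (fun z => 1 + z * G z) (G 0) 0 := by
    rw [hasDerivAt_iff_tendsto_slope]
    refine (hc0.tendsto.mono_left nhdsWithin_le_nhds).congr' ?_
    filter_upwards [self_mem_nhdsWithin] with z hz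
    have : z ≠ 0 := hz
    simp [slope_def_field]; field_simp
  rw [hd.deriv, hGdef]
  refine tsum_congr fun n => ?_
  have h1 : poch (0+1) n = n.factorial := by
    unfold poch; simp [ascPochhammer_eval_one]
  have : ((n:ℝ)+1) ≠ 0 := by positivity
  have h2 : (n.factorial : ℝ) ≠ 0 := by positivity
  rw [h1, cc_eq, Nat.factorial_succ]
  push_cast
  field_simp

noncomputable def hh (t : ℝ) (s : ℕ+) : ℝ := -t^2 / ((s:ℕ):ℝ)^2
noncomputable def ff (t : ℝ) (n s : ℕ+) : ℝ := if s < n then hh t s else 0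
noncomputable def gg (t : ℝ) (n s : ℕ+) : ℝ := if n < s then hh t s else 0
noncomputable def tt (x y : ℝ) (p : ℕ+ × Finset ℕ+ × Finset ℕ+) : ℝ :=
  1/((p.1:ℕ):ℝ)^3 * ((∏ s ∈ p.2.1, ff x p.1 s) * ∏ t ∈ p.2.2, gg y p.1 t)

lemma hh_summable (t : ℝ) : Summable fun s => ‖hh t s‖ := by
  have h : Summable fun s : ℕ => ‖-t^2 / (s:ℝ)^2‖ := by
    have := (Real.summable_one_div_nat_pow.mpr (one_lt_two)).mul_left (t^2)
    refine this.congr fun s => ?_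
    rw [norm_div, norm_neg, Real.norm_of_nonneg (sq_nonneg _), Real.norm_of_nonneg (sq_nonneg _)]
    ring
  exact h.comp_injective PNat.coe_injective

lemma ff_le (t : ℝ) (n s : ℕ+) : ‖ff t n s‖ ≤ ‖hh t s‖ := by
  unfold ff; split_ifs <;> simp
lemma gg_le (t : ℝ) (n s : ℕ+) : ‖gg t n s‖ ≤ ‖hh t s‖ := by
  unfold gg; split_ifs <;> simp

lemma ff_summable (t : ℝ) (n : ℕ+) : Summable fun s => ‖ff t n s‖ :=
  Summable.of_nonneg_of_le (fun _ => norm_nonneg _) (ff_le t n) (hh_summable t)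
lemma gg_summable (t : ℝ) (n : ℕ+) : Summable fun s => ‖gg t n s‖ :=
  Summable.of_nonneg_of_le (fun _ => norm_nonneg _) (gg_le t n) (hh_summable t)

lemma prod_norm_summable (t : ℝ) : Summable fun S : Finset ℕ+ => ∏ s ∈ S, ‖hh t s‖ :=
  summable_finsetProd_of_summable_nonneg (fun _ => norm_nonneg _) (hh_summable t)

lemma tt_summable (x y : ℝ) : Summable (tt x y) := by
  have h3 : Summable fun n : ℕ+ => 1/((n:ℕ):ℝ)^3 :=
    (Real.summable_one_div_nat_pow.mpr (by norm_num : 1 < 3)).comp_injective PNat.coe_injective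
  have h := h3.mul_of_nonneg ((prod_norm_summable x).mul_of_nonneg (prod_norm_summable y)
    (fun _ => Finset.prod_nonneg fun _ _ => norm_nonneg _)
    (fun _ => Finset.prod_nonneg fun _ _ => norm_nonneg _))
    (fun _ => by positivity)
    (fun _ => mul_nonneg (Finset.prod_nonneg fun _ _ => norm_nonneg _)
      (Finset.prod_nonneg fun _ _ => norm_nonneg _))
  refine Summable.of_norm_bounded h fun p => ?_
  unfold tt
  rw [norm_mul, norm_mul, norm_prod, norm_prod, Real.norm_of_nonneg (by positivity : 0 ≤ 1/((p.1:ℕ):ℝ)^3)]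
  gcongr
  · exact ff_le _ _ _
  · exact gg_le _ _ _

lemma prod_Iio_pnat (f : ℕ → ℝ) (k : ℕ) :
    ∏ s ∈ Finset.Iio (k.succPNat), f s = ∏ j ∈ Finset.range k, f (j+1) := by
  symm
  refine Finset.prod_bij (fun j _ => j.succPNat) ?_ ?_ ?_ ?_
  · intro j hj
    simpa [← PNat.coe_lt_coe] using hj
  · intro i _ j _ h
    exact Nat.succPNat_injective h
  · intro s hs
    refine ⟨s.natPred, ?_, by simp⟩
    have h : (s:ℕ) < k + 1 := by simpa [← PNat.coe_lt_coe] using hs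
    have := s.natPred_add_one
    simp; omega
  · intro j _; simp

lemma tprod_ff (x : ℝ) (k : ℕ) : ∏' s, (1 + ff x k.succPNat s) = PP x k := by
  rw [tprod_eq_prod (s := Finset.Iio k.succPNat)]
  · unfold PP
    have := prod_Iio_pnat (fun j => 1 - x^2/(j:ℝ)^2) k
    push_cast at this
    rw [← this]
    refine Finset.prod_congr rfl fun s hs => ?_
    rw [Finset.mem_Iio] at hs
    simp [ff, hs, hh]; ring
  · intro s hs
    rw [Finset.mem_Iio] at hs
    simp [ff, hs]

lemma hasProd_hh {y : ℝ} (hy0 : 0 < |y|) :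
    HasProd (fun s => 1 + hh y s) (Real.sin (Real.pi * y) / (Real.pi * y)) := by
  have hm : Multipliable fun s => 1 + hh y s := multipliable_one_add_of_summable (hh_summable y)
  have hm2 : Multipliable fun n : ℕ => 1 + (-y^2 / ((n + 1 : ℕ):ℝ)^2) :=
    (multipliable_pnat_iff_multipliable_succ (f := fun n : ℕ => 1 + (-y^2 / (n:ℝ)^2))).mp hm
  have e : ∏' s, (1 + hh y s) = ∏' n : ℕ, (1 + (-y^2 / ((n + 1 : ℕ):ℝ)^2)) :=
    tprod_pnat_eq_tprod_succ (f := fun n : ℕ => 1 + (-y^2 / (n:ℝ)^2))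
  have h1 := hm2.hasProd.tendsto_prod_nat
  have h2 := tendsto_nhds_unique h1 ((PP_tendsto hy0).congr fun n => by
    unfold PP
    refine Finset.prod_congr rfl fun j _ => ?_
    push_cast; ring)
  rw [← h2, ← e]
  exact hm.hasProd

lemma tprod_gg {y : ℝ} (hy0 : 0 < |y|) (hy1 : |y| < 1) (k : ℕ) :
    ∏' s, (1 + gg y k.succPNat s) = Real.sin (Real.pi * y) / (Real.pi * y) / PP y (k+1) := by
  have hg : Multipliable fun s => 1 + gg y k.succPNat s :=
    multipliable_one_add_of_summable (gg_summable y _)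
  have hf : Multipliable fun s => 1 + ff y (k+1).succPNat s :=
    multipliable_one_add_of_summable (ff_summable y _)
  have := hg.tprod_mul hf
  rw [tprod_ff] at this
  rw [eq_div_iff (PP_pos hy1 _).ne', ← this, ← (hasProd_hh hy0).tprod_eq]
  refine tprod_congr fun s => ?_
  by_cases h : k.succPNat < s
  · have h' : ¬ s < (k+1).succPNat := by
      rw [← PNat.coe_lt_coe] at *
      simp at *; omega
    simp [gg, ff, h, h']
  · have h' : s < (k+1).succPNat := by
      rw [← PNat.coe_lt_coe] at *
      simp at *; omega
    simp [gg, ff, h, h']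

lemma tsum_tt {x y : ℝ} (hy0 : 0 < |y|) (hy1 : |y| < 1) :
    ∑' p, tt x y p = ∑' k : ℕ, 1/((k:ℝ)+1)^3 * (PP x k *
      (Real.sin (Real.pi * y) / (Real.pi * y) / PP y (k+1))) := by
  rw [(tt_summable x y).tsum_prod, ← Equiv.pnatEquivNat.symm.tsum_eq]
  refine tsum_congr fun k => ?_
  have e : Equiv.pnatEquivNat.symm k = k.succPNat := rfl
  rw [e, ← tprod_ff, ← tprod_gg hy0 hy1,
    tprod_one_add (summable_finsetProd_of_summable_norm (ff_summable x _)),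
    tprod_one_add (summable_finsetProd_of_summable_norm (gg_summable y _))]
  have hs1 : Summable fun S : Finset ℕ+ => ‖∏ s ∈ S, ff x k.succPNat s‖ :=
    (summable_finsetProd_of_summable_norm (ff_summable x k.succPNat)).norm
  have hs2 : Summable fun S : Finset ℕ+ => ‖∏ s ∈ S, gg y k.succPNat s‖ :=
    (summable_finsetProd_of_summable_norm (gg_summable y k.succPNat)).norm
  rw [tsum_mul_tsum_of_summable_norm hs1 hs2, ← tsum_mul_left]
  refine tsum_congr fun p => ?_
  simp [tt]

def cardmap (p : ℕ+ × Finset ℕ+ × Finset ℕ+) : ℕ × ℕ := (p.2.1.card, p.2.2.card)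

def mid (a b : ℕ) : Fin (a+b+1) := ⟨a, by omega⟩

def emap (a b : ℕ) (m : Fin (a+b+1) → ℕ+) : ℕ+ × Finset ℕ+ × Finset ℕ+ :=
  (m (mid a b), (Finset.Iio (mid a b)).image m, (Finset.Ioi (mid a b)).image m)

lemma emap_card {a b : ℕ} {m : Fin (a+b+1) → ℕ+} (hm : StrictMono m) :
    emap a b m ∈ cardmap ⁻¹' {(a,b)} := by
  simp only [Set.mem_preimage, Set.mem_singleton_iff, cardmap, emap,
    Finset.card_image_of_injective _ hm.injective, Fin.card_Iio, Fin.card_Ioi, mid]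
  simp

lemma emap_inj {a b : ℕ} {m m' : Fin (a+b+1) → ℕ+} (hm : StrictMono m) (hm' : StrictMono m')
    (h : emap a b m = emap a b m') : m = m' := by
  have key : ∀ m : Fin (a+b+1) → ℕ+, Set.range m =
      insert (emap a b m).1 (↑(emap a b m).2.1 ∪ ↑(emap a b m).2.2 : Set ℕ+) := by
    intro m
    ext v
    simp only [emap, Set.mem_range, Set.mem_insert_iff, Set.mem_union, Finset.mem_coe,
      Finset.mem_image, Finset.mem_Iio, Finset.mem_Ioi]
    constructor
    · rintro ⟨i, rfl⟩
      rcases lt_trichotomy i (mid a b) with hi | hi | hi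
      · exact Or.inr (Or.inl ⟨i, hi, rfl⟩)
      · exact Or.inl (by rw [hi])
      · exact Or.inr (Or.inr ⟨i, hi, rfl⟩)
    · rintro (rfl | ⟨i, _, rfl⟩ | ⟨i, _, rfl⟩) <;> exact ⟨_, rfl⟩
  refine (StrictMono.range_inj hm hm').mp ?_
  rw [key, key, h]

lemma emap_surj {a b : ℕ} (n : ℕ+) (S T : Finset ℕ+) (hS : S.card = a) (hT : T.card = b)
    (hSn : ∀ s ∈ S, s < n) (hTn : ∀ t ∈ T, n < t) :
    ∃ m : Fin (a+b+1) → ℕ+, StrictMono m ∧ emap a b m = (n, S, T) := by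
  let m : Fin (a+b+1) → ℕ+ := fun i =>
    if h : (i:ℕ) < a then S.orderEmbOfFin hS ⟨i, h⟩
    else if h' : a < (i:ℕ) then T.orderEmbOfFin hT ⟨i - a - 1, by omega⟩ else n
  have m1 : ∀ (i : Fin (a+b+1)) (h : (i:ℕ) < a), m i = S.orderEmbOfFin hS ⟨i, h⟩ := fun i h => by simp [m, h]
  have m2 : ∀ (i : Fin (a+b+1)) (h : a < (i:ℕ)), m i = T.orderEmbOfFin hT ⟨i - a - 1, by omega⟩ := fun i h => by
    simp [m, h, h.le]
  have m3 : ∀ i : Fin (a+b+1), (i:ℕ) = a → m i = n := fun i h => by simp [m, h]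
  have q1 : ∀ i : Fin (a+b+1), (i:ℕ) < a → m i ∈ S := fun i h => by
    rw [m1 i h]; exact Finset.orderEmbOfFin_mem _ _ _
  have q2 : ∀ i : Fin (a+b+1), a < (i:ℕ) → m i ∈ T := fun i h => by
    rw [m2 i h]; exact Finset.orderEmbOfFin_mem _ _ _
  refine ⟨m, ?_, ?_⟩
  · intro i j hij
    have hij' : (i:ℕ) < j := hij
    rcases lt_trichotomy (i:ℕ) a with hi | hi | hi <;> rcases lt_trichotomy (j:ℕ) a with hj | hj | hj
    · rw [m1 i hi, m1 j hj]
      exact (S.orderEmbOfFin hS).strictMono (by simpa using hij)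
    · rw [m3 j hj]; exact hSn _ (q1 i hi)
    · exact (hSn _ (q1 i hi)).trans (hTn _ (q2 j hj))
    · omega
    · omega
    · rw [m3 i hi]; exact hTn _ (q2 j hj)
    · omega
    · omega
    · rw [m2 i hi, m2 j hj]
      exact (T.orderEmbOfFin hT).strictMono (by rw [Fin.lt_def]; simp only; omega)
  · unfold emap
    refine Prod.ext (m3 _ rfl) (Prod.ext ?_ ?_)
    · ext v
      simp only [Finset.mem_image, Finset.mem_Iio]
      constructor
      · rintro ⟨i, hi, rfl⟩
        exact q1 i hi
      · intro hv
        have : v ∈ Set.range (S.orderEmbOfFin hS) := by rw [Finset.range_orderEmbOfFin]; exact hv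
        obtain ⟨i, rfl⟩ := this
        have hi := i.2
        refine ⟨⟨i, by omega⟩, hi, ?_⟩
        rw [m1 _ hi]
    · ext v
      simp only [Finset.mem_image, Finset.mem_Ioi]
      constructor
      · rintro ⟨i, hi, rfl⟩
        exact q2 i hi
      · intro hv
        have : v ∈ Set.range (T.orderEmbOfFin hT) := by rw [Finset.range_orderEmbOfFin]; exact hv
        obtain ⟨i, rfl⟩ := this
        have hi := i.2
        have hlt : a < a + 1 + (i:ℕ) := by omega
        refine ⟨⟨a + 1 + i, by omega⟩, hlt, ?_⟩
        rw [m2 _ hlt]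
        congr 1
        ext; simp only; omega

lemma tt_emap (x y : ℝ) {a b : ℕ} {m : Fin (a+b+1) → ℕ+} (hm : StrictMono m) :
    tt x y (emap a b m) = ((-x^2)^a * (-y^2)^b) *
      ∏ i : Fin (a+b+1), (1:ℝ) / ((m i : ℕ) : ℝ) ^ (if (i:ℕ) = a then 3 else 2) := by
  have hu : (Finset.univ : Finset (Fin (a+b+1))) =
      insert (mid a b) (Finset.Iio (mid a b) ∪ Finset.Ioi (mid a b)) := by
    ext i
    simp only [Finset.mem_univ, Finset.mem_insert, Finset.mem_union, Finset.mem_Iio,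
      Finset.mem_Ioi, true_iff]
    rcases lt_trichotomy i (mid a b) with h | h | h <;> simp [h]
  have hd : Disjoint (Finset.Iio (mid a b)) (Finset.Ioi (mid a b)) := by
    rw [Finset.disjoint_left]; intro i hi hj
    rw [Finset.mem_Iio] at hi; rw [Finset.mem_Ioi] at hj
    exact lt_asymm hi hj
  rw [hu, Finset.prod_insert (by simp), Finset.prod_union hd]
  unfold tt emap
  simp only
  rw [Finset.prod_image hm.injective.injOn, Finset.prod_image hm.injective.injOn]
  have e1 : ∏ i ∈ Finset.Iio (mid a b), ff x (m (mid a b)) (m i) =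
      (-x^2)^a * ∏ i ∈ Finset.Iio (mid a b), (1:ℝ) / ((m i : ℕ) : ℝ) ^ (if (i:ℕ) = a then 3 else 2) := by
    have hc : (-x^2)^a = ∏ _i ∈ Finset.Iio (mid a b), (-x^2) := by
      rw [Finset.prod_const]; congr 1; simp [mid]
    rw [hc, ← Finset.prod_mul_distrib]
    refine Finset.prod_congr rfl fun i hi => ?_
    rw [Finset.mem_Iio] at hi
    have hi' : (i:ℕ) < a := hi
    simp [ff, hh, hm hi, hi'.ne]; ring
  have e2 : ∏ i ∈ Finset.Ioi (mid a b), gg y (m (mid a b)) (m i) =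
      (-y^2)^b * ∏ i ∈ Finset.Ioi (mid a b), (1:ℝ) / ((m i : ℕ) : ℝ) ^ (if (i:ℕ) = a then 3 else 2) := by
    have hc : (-y^2)^b = ∏ _i ∈ Finset.Ioi (mid a b), (-y^2) := by
      rw [Finset.prod_const]; congr 1; simp [mid]
    rw [hc, ← Finset.prod_mul_distrib]
    refine Finset.prod_congr rfl fun i hi => ?_
    rw [Finset.mem_Ioi] at hi
    have hi' : a < (i:ℕ) := hi
    simp [gg, hh, hm hi, hi'.ne']; ring
  rw [e1, e2]
  simp [mid]; ring

lemma fiber_tsum (x y : ℝ) (a b : ℕ) :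
    ∑' p : cardmap ⁻¹' {(a,b)}, tt x y p = ((-x^2)^a * (-y^2)^b) * Hmzv a b := by
  unfold Hmzv mzv
  rw [← tsum_mul_left]
  let e : {m : Fin (a+b+1) → ℕ+ | StrictMono m} → cardmap ⁻¹' {(a,b)} :=
    fun m => ⟨emap a b m, emap_card m.2⟩
  have he : Function.Injective e := fun m m' h =>
    Subtype.ext (emap_inj m.2 m'.2 (congrArg Subtype.val h))
  rw [← he.tsum_eq (f := fun p : cardmap ⁻¹' {(a,b)} => tt x y p)]
  · have := tsum_subtype {m : Fin (a+b+1) → ℕ+ | StrictMono m} (fun m => tt x y (emap a b m))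
    simp only [e]
    rw [this]
    refine tsum_congr fun m => ?_
    by_cases hm : StrictMono m
    · simp only [Set.indicator, Set.mem_ofPred_eq, hm, if_true]
      rw [tt_emap x y hm]
    · simp [Set.indicator, hm]
  · rintro ⟨⟨n, S, T⟩, hp⟩ hne
    simp only [Set.mem_preimage, Set.mem_singleton_iff, cardmap, Prod.mk.injEq] at hp
    rw [Function.mem_support] at hne
    simp only [tt] at hne
    have h1 : ∀ s ∈ S, s < n := by
      intro s hs
      by_contra hcon
      exact hne (by rw [Finset.prod_eq_zero hs (by simp [ff, hcon])]; simp)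
    have h2 : ∀ t ∈ T, n < t := by
      intro t ht
      by_contra hcon
      exact hne (by rw [Finset.prod_eq_zero ht (by simp [gg, hcon])]; simp)
    obtain ⟨m, hm, hme⟩ := emap_surj n S T hp.1 hp.2 h1 h2
    exact ⟨⟨m, hm⟩, Subtype.ext hme⟩

lemma Fgen_eq (x y : ℝ) : Fgen x y = (-x^2 * y) * ∑' p, tt x y p := by
  have h := (tt_summable x y).hasSum.tsum_fiberwise cardmap
  rw [← h.tsum_eq, h.summable.tsum_prod, ← tsum_mul_left]
  unfold Fgen
  refine tsum_congr fun a => ?_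
  rw [← tsum_mul_left]
  refine tsum_congr fun b => ?_
  rw [fiber_tsum, neg_pow (x^2), neg_pow (y^2)]
  ring

theorem Fgen_eq_deriv_F32 (x y : ℝ) (hx : |x| < 1) (hy0 : 0 < |y|) (hy1 : |y| < 1) :
    Real.pi / Real.sin (Real.pi * y) * Fgen x y =
      deriv (fun z : ℝ => F32 x (-x) z (1 + y) (1 - y)) 0 := by
  rw [deriv_F32_eq hx hy0 hy1, Fgen_eq, tsum_tt hy0 hy1, ← mul_assoc, ← tsum_mul_left]
  refine tsum_congr fun k => ?_
  have h1 := sin_ne hy0 hy1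
  have h2 := Real.pi_pos.ne'
  have h3 : y ≠ 0 := abs_pos.mp hy0
  have h4 := (PP_pos hy1 (k+1)).ne'
  have h5 : ((k:ℝ)+1) ≠ 0 := by positivity
  field_simp
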